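/- Let W ∈ 𝒲₀ satisfy ∫_{[0,1]⁴} W(x₁,x₂)(1 − W(x₂,x₃))W(x₃,x₄)(1 − W(x₄,x₁)) dx₁dx₂dx₃dx₄ = 0. Then t(P₃,W) − t(K₂,W) ≥ −1/6, where t(K₂,W) = ∫_{[0,1]²} W(x,y) dx dy and t(P₃,W) = ∫₀¹ (∫₀¹ W(x,y) dy)² dx; equality holds if and only if W is weakly isomorphic to the half-graphon W_h defined by W_h(x,y) = 1 if x + y ≤ 1 and W_h(x,y) = 0 otherwise. -/

import Mathlib

open MeasureTheory
open scoped Classical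

noncomputable section

/-- The unit interval `[0,1]` as a subset of `ℝ`. -/
def I01 : Set ℝ := Set.Icc 0 1

/-- The cube `[0,1]^n`. -/
def cube (n : ℕ) : Set (Fin n → ℝ) := Set.univ.pi fun _ => I01

/-- `W` belongs to `𝒲`: a bounded symmetric measurable function on `[0,1]²`. -/
def memW (W : ℝ → ℝ → ℝ) : Prop :=
  Measurable (Function.uncurry W) ∧
  (∀ x ∈ I01, ∀ y ∈ I01, W x y = W y x) ∧
  ∃ C : ℝ, ∀ x ∈ I01, ∀ y ∈ I01, |W x y| ≤ C

/-- `W` belongs to `𝒲₀`: a graphon, i.e. symmetric measurable with values in `[0,1]`. -/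
def memW0 (W : ℝ → ℝ → ℝ) : Prop :=
  Measurable (Function.uncurry W) ∧
  (∀ x ∈ I01, ∀ y ∈ I01, W x y = W y x) ∧
  ∀ x ∈ I01, ∀ y ∈ I01, W x y ∈ Set.Icc (0 : ℝ) 1

/-- Homomorphism density `t(F,W)` of a finite simple graph `F` in `W`. -/
def homDensity {n : ℕ} (F : SimpleGraph (Fin n)) (W : ℝ → ℝ → ℝ) : ℝ :=
  ∫ x in cube n,
    ∏ p ∈ Finset.univ.filter (fun p : Fin n × Fin n => p.1 < p.2 ∧ F.Adj p.1 p.2),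
      W (x p.1) (x p.2)

/-- Two kernels are weakly isomorphic if all their homomorphism densities agree. -/
def WeaklyIsomorphic (U W : ℝ → ℝ → ℝ) : Prop :=
  ∀ (n : ℕ) (F : SimpleGraph (Fin n)), homDensity F U = homDensity F W

/-- `W` is finitely forcible within the class `A`. -/
def FinitelyForcible (A : (ℝ → ℝ → ℝ) → Prop) (W : ℝ → ℝ → ℝ) : Prop :=
  A W ∧ ∃ (k : ℕ) (n : Fin k → ℕ) (F : ∀ i, SimpleGraph (Fin (n i))),
    ∀ U, A U → (∀ i, homDensity (F i) U = homDensity (F i) W) → WeaklyIsomorphic U W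

/-- Density function `t^k(F,W)` of a `k`-labeled graph, as a function of the
labeled variables; the graph has `k` labeled and `m` unlabeled vertices. -/
def labDensity {k m : ℕ} (F : SimpleGraph (Fin (k + m))) (W : ℝ → ℝ → ℝ)
    (x : Fin k → ℝ) : ℝ :=
  ∫ y in cube m,
    ∏ p ∈ Finset.univ.filter
        (fun p : Fin (k + m) × Fin (k + m) => p.1 < p.2 ∧ F.Adj p.1 p.2),
      W (Fin.append x y p.1) (Fin.append x y p.2)


/-!
The vanishing of the 4-cycle integral says that the neighbourhoods of almost every two vertices
are nested. The measure of their symmetric difference is then the distance of their degrees, and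
integrating over pairs gives `E|d(X) - d(Y)| = 2 (E d - E d²)` for independent uniform vertices
`X` and `Y`. On the other hand, the identity of Cramér
`∫ (F_ν - F_ρ)² = E|X₁ - Y₁| - (E|X₁ - X₂| + E|Y₁ - Y₂|) / 2` for independent `X₁, X₂ ∼ ν` and
`Y₁, Y₂ ∼ ρ`, applied to the law of `d` and the uniform law on `[0,1]`, turns this into
`2 (E d² - E d) + 1/3 = ∫ (F_d(t) - F(t))² dt ≥ 0`, where `F` is the uniform distribution function.

Equality forces the degrees to be uniformly distributed. By nestedness, a neighbour of `y` is
adjacent to all vertices of degree at least `d(y)`, a set of measure `1 - d(y)`, so adjacency of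
`x` and `y` needs `d(x) + d(y) ≥ 1`; the complement of the graphon gives the converse. Hence `W` is
the pullback of the half-graphon along the measure-preserving map `1 - d`.
-/

section CramerDistance

open Set ProbabilityTheory

lemma stieltjesFunction_le_of_dense {R : Type*} [LinearOrder R] [TopologicalSpace R]
    [OrderTopology R] [DenselyOrdered R] [NoMaxOrder R] {f g : StieltjesFunction R} {s : Set R}
    (hs : Dense s) (hfg : ∀ t ∈ s, f t ≤ g t) (x : R) : f x ≤ g x := by
  rw [← g.iInf_Ioi_eq x]
  refine le_ciInf fun ⟨r, hxr⟩ => ?_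
  obtain ⟨t, hts, hxt, htr⟩ := hs.exists_between hxr
  exact (f.mono hxt.le).trans ((hfg t hts).trans (g.mono htr.le))

variable (ν ρ : Measure ℝ)

/-- The probability that a level `t` lies between independent samples of `ν` and `ρ`. The
half-open convention makes it a polynomial in the two distribution functions at `t`. -/
def crossingProb (t : ℝ) : ℝ :=
  (ν.prod ρ).real {p | t ∈ Ico (min p.1 p.2) (max p.1 p.2)}

lemma measurableSet_crossing :
    MeasurableSet {q : ℝ × ℝ × ℝ | q.1 ∈ Ico (min q.2.1 q.2.2) (max q.2.1 q.2.2)} :=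
  (measurableSet_le (f := fun q : ℝ × ℝ × ℝ => min q.2.1 q.2.2) (g := fun q => q.1)
    (by fun_prop) (by fun_prop)).inter
  (measurableSet_lt (f := fun q : ℝ × ℝ × ℝ => q.1) (g := fun q => max q.2.1 q.2.2)
    (by fun_prop) (by fun_prop))

lemma measurable_crossingProb [SFinite ν] [SFinite ρ] : Measurable (crossingProb ν ρ) :=
  (measurable_measure_prodMk_left (ν := ν.prod ρ) measurableSet_crossing).ennreal_toReal

variable [IsProbabilityMeasure ν] [IsProbabilityMeasure ρ]

lemma crossingProb_eq_cdf (t : ℝ) :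
    crossingProb ν ρ t = cdf ν t * (1 - cdf ρ t) + (1 - cdf ν t) * cdf ρ t := by
  have split : {p : ℝ × ℝ | t ∈ Ico (min p.1 p.2) (max p.1 p.2)}
      = Iic t ×ˢ (Iic t)ᶜ ∪ (Iic t)ᶜ ×ˢ Iic t := by
    ext p
    simp only [mem_ofPred_eq, mem_Ico, mem_union, mem_prod, mem_compl_iff, mem_Iic, min_le_iff,
      lt_max_iff]
    grind
  have disjoint : Disjoint (Iic t ×ˢ (Iic t)ᶜ) ((Iic t)ᶜ ×ˢ Iic t) :=
    disjoint_compl_right.set_prod_left _ _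
  rw [crossingProb, split, measureReal_union disjoint (by measurability), measureReal_prod_prod,
    measureReal_prod_prod, probReal_compl_eq_one_sub measurableSet_Iic,
    probReal_compl_eq_one_sub measurableSet_Iic, cdf_eq_real, cdf_eq_real]

lemma sq_cdf_sub_cdf (t : ℝ) :
    (cdf ν t - cdf ρ t) ^ 2 =
      crossingProb ν ρ t - (crossingProb ν ν t + crossingProb ρ ρ t) / 2 := by
  simp only [crossingProb_eq_cdf]
  ring

-- By Tonelli, both sides measure the set of `(t, x, y)` with `t` between `x` and `y`.
lemma lintegral_crossingProb :
    ∫⁻ t, ENNReal.ofReal (crossingProb ν ρ t)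
      = ∫⁻ p, ENNReal.ofReal |p.1 - p.2| ∂(ν.prod ρ) := by
  have slices := (Measure.prod_apply (μ := volume) (ν := ν.prod ρ)
    measurableSet_crossing).symm.trans (Measure.prod_apply_symm measurableSet_crossing)
  simp only [preimage_ofPred_eq, ofPred_mem_eq, Real.volume_Ico, max_sub_min_eq_abs'] at slices
  exact (lintegral_congr fun t => ofReal_measureReal).trans slices

lemma integral_crossingProb :
    ∫ t, crossingProb ν ρ t = ∫ p, |p.1 - p.2| ∂(ν.prod ρ) := by
  rw [integral_eq_lintegral_of_nonneg_ae (f := crossingProb ν ρ)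
      (.of_forall fun _ => measureReal_nonneg) (measurable_crossingProb ν ρ).aestronglyMeasurable,
    integral_eq_lintegral_of_nonneg_ae (.of_forall fun _ => abs_nonneg _) (by fun_prop),
    lintegral_crossingProb]

variable {ν ρ}

lemma integrable_crossingProb (hν : Integrable id ν) (hρ : Integrable id ρ) :
    Integrable (crossingProb ν ρ) := by
  have hdist : Integrable (fun p : ℝ × ℝ => |p.1 - p.2|) (ν.prod ρ) :=
    ((hν.comp_fst ρ).sub (hρ.comp_snd ν)).abs
  refine ⟨(measurable_crossingProb ν ρ).aestronglyMeasurable, ?_⟩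
  rw [hasFiniteIntegral_iff_ofReal (f := crossingProb ν ρ)
      (.of_forall fun _ => measureReal_nonneg), lintegral_crossingProb,
    ← hasFiniteIntegral_iff_ofReal (.of_forall fun _ => abs_nonneg _)]
  exact hdist.hasFiniteIntegral

lemma integrable_sq_cdf_sub_cdf (hν : Integrable id ν) (hρ : Integrable id ρ) :
    Integrable fun t => (cdf ν t - cdf ρ t) ^ 2 := by
  simp only [sq_cdf_sub_cdf]
  exact (integrable_crossingProb hν hρ).sub
    (((integrable_crossingProb hν hν).add (integrable_crossingProb hρ hρ)).div_const 2)

theorem integral_sq_cdf_sub_cdf (hν : Integrable id ν) (hρ : Integrable id ρ) :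
    ∫ t, (cdf ν t - cdf ρ t) ^ 2 =
      (∫ p, |p.1 - p.2| ∂(ν.prod ρ)) -
        ((∫ p, |p.1 - p.2| ∂(ν.prod ν)) + ∫ p, |p.1 - p.2| ∂(ρ.prod ρ)) / 2 := by
  have hνν := integrable_crossingProb hν hν
  have hρρ := integrable_crossingProb hρ hρ
  simp only [sq_cdf_sub_cdf, ← integral_crossingProb]
  rw [integral_sub (integrable_crossingProb hν hρ) (by exact (hνν.add hρρ).div_const 2),
    integral_div, integral_add hνν hρρ]

theorem eq_of_integral_sq_cdf_sub_cdf_eq_zero (hν : Integrable id ν) (hρ : Integrable id ρ)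
    (h : ∫ t, (cdf ν t - cdf ρ t) ^ 2 = 0) : ν = ρ := by
  rw [integral_eq_zero_iff_of_nonneg (fun t => sq_nonneg _) (integrable_sq_cdf_sub_cdf hν hρ)] at h
  have hdense : Dense {t | cdf ν t = cdf ρ t} := by
    refine Measure.dense_of_ae (μ := volume) ?_
    filter_upwards [h] with t ht
    exact sub_eq_zero.1 (pow_eq_zero_iff two_ne_zero |>.1 ht)
  refine Measure.eq_of_cdf ν ρ (StieltjesFunction.ext fun x => le_antisymm ?_ ?_)
  · exact stieltjesFunction_le_of_dense hdense (fun t ht => le_of_eq ht) x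
  · exact stieltjesFunction_le_of_dense hdense (fun t ht => ge_of_eq ht) x

end CramerDistance

section UniformMeasure

open Set ProbabilityTheory

/-- The uniform distribution on `[0,1]`, as a measure on `ℝ`. -/
abbrev uniformI01 : Measure ℝ := volume.restrict I01

instance : IsProbabilityMeasure uniformI01 := ⟨by simp [I01]⟩

lemma integral_uniformI01 (f : ℝ → ℝ) : ∫ t, f t ∂uniformI01 = ∫ t in (0 : ℝ)..1, f t := by
  rw [uniformI01, I01, integral_Icc_eq_integral_Ioc, intervalIntegral.integral_of_le zero_le_one]

lemma ae_mem_I01 : ∀ᵐ t ∂uniformI01, t ∈ I01 := ae_restrict_mem measurableSet_Icc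

lemma measureReal_uniformI01_Ici {a : ℝ} (ha : a ∈ I01) : uniformI01.real (Ici a) = 1 - a := by
  have : Ici a ∩ I01 = Icc a 1 := by
    simp [I01, ← Ici_inter_Iic, ← inter_assoc, ha.1]
  rw [measureReal_restrict_apply measurableSet_Ici, this, Real.volume_real_Icc_of_le ha.2]

lemma measurePreserving_one_sub_uniformI01 :
    MeasurePreserving (fun t : ℝ => 1 - t) uniformI01 uniformI01 := by
  have h := (Measure.measurePreserving_sub_left (volume : Measure ℝ) 1).restrict_preimage
    (s := I01) measurableSet_Icc
  rwa [I01, preimage_const_sub_Icc, sub_self, sub_zero] at h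

lemma integrable_id_of_ae_mem_I01 {ν : Measure ℝ} [IsFiniteMeasure ν] (hν : ∀ᵐ x ∂ν, x ∈ I01) :
    Integrable id ν :=
  .of_mem_Icc 0 1 aemeasurable_id hν

lemma integral_id_uniformI01 : ∫ x, x ∂uniformI01 = 1 / 2 := by
  simp [integral_uniformI01]

lemma integral_sq_uniformI01 : ∫ x, x ^ 2 ∂uniformI01 = 1 / 3 := by
  norm_num [integral_uniformI01]

lemma integral_abs_sub_uniformI01 {x : ℝ} (hx : x ∈ I01) :
    ∫ y, |x - y| ∂uniformI01 = x ^ 2 - x + 1 / 2 := by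
  have below : ∫ y in (0 : ℝ)..x, |x - y| = ∫ y in (0 : ℝ)..x, (x - y) := by
    refine intervalIntegral.integral_congr fun y hy => abs_of_nonneg ?_
    rw [uIcc_of_le hx.1] at hy
    exact sub_nonneg.2 hy.2
  have above : ∫ y in x..1, |x - y| = ∫ y in x..1, (y - x) := by
    refine intervalIntegral.integral_congr fun y hy => ?_
    rw [uIcc_of_le hx.2] at hy
    simpa using abs_of_nonpos (sub_nonpos.2 hy.1)
  have integrable (a b : ℝ) : IntervalIntegrable (fun y => |x - y|) volume a b :=
    Continuous.intervalIntegrable (by fun_prop) a b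
  rw [integral_uniformI01, ← intervalIntegral.integral_add_adjacent_intervals (integrable 0 x)
    (integrable x 1), below, above, intervalIntegral.integral_comp_sub_left (fun u => u),
    intervalIntegral.integral_comp_sub_right (fun u => u), integral_id, integral_id]
  ring

lemma integral_prod_uniformI01_abs_sub {ν : Measure ℝ} [IsProbabilityMeasure ν]
    (hν : ∀ᵐ x ∂ν, x ∈ I01) :
    ∫ p, |p.1 - p.2| ∂(ν.prod uniformI01) = (∫ x, x ^ 2 ∂ν) - (∫ x, x ∂ν) + 1 / 2 := by
  have hid := integrable_id_of_ae_mem_I01 hν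
  have hsq : Integrable (fun x => x ^ 2) ν := by
    refine .of_mem_Icc 0 1 (by fun_prop) ?_
    filter_upwards [hν] with x hx
    exact ⟨sq_nonneg x, pow_le_one₀ hx.1 hx.2⟩
  have hdist : Integrable (fun p : ℝ × ℝ => |p.1 - p.2|) (ν.prod uniformI01) :=
    ((hid.comp_fst _).sub ((integrable_id_of_ae_mem_I01 ae_mem_I01).comp_snd ν)).abs
  calc ∫ p, |p.1 - p.2| ∂(ν.prod uniformI01)
      = ∫ x, ∫ y, |x - y| ∂uniformI01 ∂ν := integral_prod _ hdist
    _ = ∫ x, (x ^ 2 - x + 1 / 2) ∂ν := by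
        refine integral_congr_ae ?_
        filter_upwards [hν] with x hx using integral_abs_sub_uniformI01 hx
    _ = (∫ x, x ^ 2 ∂ν) - (∫ x, x ∂ν) + 1 / 2 := by
        rw [integral_add (by exact hsq.sub hid) (integrable_const _),
          integral_sub hsq (by exact hid), integral_const, probReal_univ, one_smul]

theorem integral_sq_cdf_sub_cdf_uniformI01 {ν : Measure ℝ} [IsProbabilityMeasure ν]
    (hν : ∀ᵐ x ∂ν, x ∈ I01) :
    ∫ t, (cdf ν t - cdf uniformI01 t) ^ 2 =
      (∫ x, x ^ 2 ∂ν) - (∫ x, x ∂ν) + 1 / 3 - (∫ p, |p.1 - p.2| ∂(ν.prod ν)) / 2 := by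
  rw [integral_sq_cdf_sub_cdf (integrable_id_of_ae_mem_I01 hν)
      (integrable_id_of_ae_mem_I01 ae_mem_I01),
    integral_prod_uniformI01_abs_sub hν, integral_prod_uniformI01_abs_sub ae_mem_I01,
    integral_sq_uniformI01, integral_id_uniformI01]
  ring

end UniformMeasure

section Graphon

open Set ProbabilityTheory

variable {Ω : Type*} [MeasurableSpace Ω]

/-- A graphon on an arbitrary measurable space: a symmetric measurable kernel with values in
`[0,1]`. Symmetry and the bounds are required everywhere, not only almost everywhere. -/
structure IsGraphon (W : Ω → Ω → ℝ) : Prop where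
  measurable : Measurable (Function.uncurry W)
  symm : ∀ x y, W x y = W y x
  mem_Icc : ∀ x y, W x y ∈ Icc (0 : ℝ) 1

variable {W : Ω → Ω → ℝ}

lemma IsGraphon.one_sub (hW : IsGraphon W) : IsGraphon fun x y => 1 - W x y where
  measurable := measurable_const.sub hW.measurable
  symm x y := by rw [hW.symm]
  mem_Icc x y := Icc.one_sub_mem (hW.mem_Icc x y)

variable (μ : Measure Ω)

variable (W) in
/-- The normalized degree of a vertex `x` of the graphon `W`. -/
def degree (x : Ω) : ℝ := ∫ y, W x y ∂μ

variable (W) in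
/-- The measure of the difference of the neighbourhoods of `y` and `z`; for a `[0,1]`-valued `W`
neighbourhoods are fuzzy sets and intersection is the product. -/
def nbhdDiff (y z : Ω) : ℝ := ∫ x, W y x * (1 - W z x) ∂μ

variable (W) in
/-- Almost every two neighbourhoods in `W` are comparable under almost everywhere inclusion. -/
def HasNestedNbhds : Prop :=
  ∀ᵐ p ∂(μ.prod μ), nbhdDiff W μ p.1 p.2 = 0 ∨ nbhdDiff W μ p.2 p.1 = 0

variable {μ}

lemma integral_mem_Icc [IsProbabilityMeasure μ] {f : Ω → ℝ} {a b : ℝ} (hf : AEMeasurable f μ)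
    (h : ∀ᵐ x ∂μ, f x ∈ Icc a b) : ∫ x, f x ∂μ ∈ Icc a b :=
  (convex_Icc a b).integral_mem isClosed_Icc h (.of_mem_Icc a b hf h)

lemma nbhdDiff_one_sub (y z : Ω) :
    nbhdDiff (fun x y => 1 - W x y) μ y z = nbhdDiff W μ z y := by
  simp only [nbhdDiff, sub_sub_cancel, mul_comm]

lemma HasNestedNbhds.one_sub (h : HasNestedNbhds W μ) :
    HasNestedNbhds (fun x y => 1 - W x y) μ := by
  simpa only [HasNestedNbhds, nbhdDiff_one_sub, or_comm] using h

namespace IsGraphon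

variable (hW : IsGraphon W)
include hW

lemma measurable_comp {α : Type*} [MeasurableSpace α] {f g : α → Ω} (hf : Measurable f)
    (hg : Measurable g) : Measurable fun a => W (f a) (g a) :=
  hW.measurable.comp (hf.prodMk hg)

lemma mul_one_sub_mem_Icc (x y z w : Ω) : W x y * (1 - W z w) ∈ Icc (0 : ℝ) 1 :=
  unitInterval.mul_mem (hW.mem_Icc x y) (hW.one_sub.mem_Icc z w)

lemma integral_left (y : Ω) : ∫ x, W x y ∂μ = degree W μ y := by
  simp only [degree, hW.symm y]

variable [IsProbabilityMeasure μ]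

lemma integrable_right (x : Ω) : Integrable (W x) μ :=
  .of_mem_Icc 0 1 (hW.measurable_comp measurable_const measurable_id).aemeasurable
    (.of_forall (hW.mem_Icc x))

lemma integrable_left (y : Ω) : Integrable (fun x => W x y) μ :=
  (hW.integrable_right y).congr (.of_forall (hW.symm y))

lemma integrable_mul_one_sub (y z : Ω) : Integrable (fun x => W y x * (1 - W z x)) μ := by
  refine .of_mem_Icc 0 1 ?_ (.of_forall fun x => hW.mul_one_sub_mem_Icc y x z x)
  have := hW.measurable
  fun_prop

lemma measurable_degree : Measurable (degree W μ) :=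
  hW.measurable.stronglyMeasurable.integral_prod_right.measurable

lemma degree_mem_Icc (x : Ω) : degree W μ x ∈ Icc (0 : ℝ) 1 :=
  integral_mem_Icc (hW.integrable_right x).aestronglyMeasurable.aemeasurable
    (.of_forall (hW.mem_Icc x))

lemma degree_one_sub (x : Ω) : degree (fun x y => 1 - W x y) μ x = 1 - degree W μ x := by
  rw [degree, integral_sub (integrable_const 1) (hW.integrable_right x), integral_const,
    probReal_univ, one_smul, degree]

lemma measurable_nbhdDiff : Measurable fun p : Ω × Ω => nbhdDiff W μ p.1 p.2 := by
  have := hW.measurable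
  have : Measurable fun q : (Ω × Ω) × Ω => W q.1.1 q.2 * (1 - W q.1.2 q.2) := by fun_prop
  exact this.stronglyMeasurable.integral_prod_right.measurable

lemma nbhdDiff_mem_Icc (y z : Ω) : nbhdDiff W μ y z ∈ Icc (0 : ℝ) 1 :=
  integral_mem_Icc (hW.integrable_mul_one_sub y z).aestronglyMeasurable.aemeasurable
    (.of_forall fun x => hW.mul_one_sub_mem_Icc y x z x)

lemma integrable_nbhdDiff : Integrable (fun p : Ω × Ω => nbhdDiff W μ p.1 p.2) (μ.prod μ) :=
  .of_mem_Icc 0 1 hW.measurable_nbhdDiff.aemeasurable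
    (.of_forall fun p => hW.nbhdDiff_mem_Icc p.1 p.2)

lemma nbhdDiff_sub_nbhdDiff (y z : Ω) :
    nbhdDiff W μ y z - nbhdDiff W μ z y = degree W μ y - degree W μ z := by
  rw [nbhdDiff, nbhdDiff, degree, degree,
    ← integral_sub (hW.integrable_mul_one_sub y z) (hW.integrable_mul_one_sub z y),
    ← integral_sub (hW.integrable_right y) (hW.integrable_right z)]
  congr with x
  ring

lemma integrable_degree : Integrable (degree W μ) μ :=
  .of_mem_Icc 0 1 hW.measurable_degree.aemeasurable (.of_forall hW.degree_mem_Icc)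

lemma integrable_sq_degree : Integrable (fun x => degree W μ x ^ 2) μ := by
  refine .of_mem_Icc 0 1 (hW.measurable_degree.pow_const 2).aemeasurable (.of_forall fun x => ?_)
  have h := hW.degree_mem_Icc (μ := μ) x
  exact ⟨sq_nonneg _, pow_le_one₀ h.1 h.2⟩

lemma integral_nbhdDiff :
    ∫ p, nbhdDiff W μ p.1 p.2 ∂(μ.prod μ) =
      (∫ x, degree W μ x ∂μ) - ∫ x, degree W μ x ^ 2 ∂μ := by
  have hint : Integrable (Function.uncurry fun (p : Ω × Ω) x => W p.1 x * (1 - W p.2 x))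
      ((μ.prod μ).prod μ) := by
    refine .of_mem_Icc 0 1 (Measurable.aemeasurable ?_)
      (.of_forall fun q => hW.mul_one_sub_mem_Icc q.1.1 q.2 q.1.2 q.2)
    have := hW.measurable
    fun_prop
  calc ∫ p, nbhdDiff W μ p.1 p.2 ∂(μ.prod μ)
      = ∫ x, ∫ p : Ω × Ω, W p.1 x * (1 - W p.2 x) ∂(μ.prod μ) ∂μ := integral_integral_swap hint
    _ = ∫ x, degree W μ x * (1 - degree W μ x) ∂μ := by
        congr with x
        rw [← hW.degree_one_sub, ← hW.integral_left, ← hW.one_sub.integral_left,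
          ← integral_prod_mul]
    _ = (∫ x, degree W μ x ∂μ) - ∫ x, degree W μ x ^ 2 ∂μ := by
        rw [← integral_sub hW.integrable_degree hW.integrable_sq_degree]
        congr with x
        ring

lemma abs_degree_sub_degree (h : HasNestedNbhds W μ) :
    ∀ᵐ p ∂(μ.prod μ),
      |degree W μ p.1 - degree W μ p.2| = nbhdDiff W μ p.1 p.2 + nbhdDiff W μ p.2 p.1 := by
  filter_upwards [h] with p hp
  have hnonneg (y z : Ω) : 0 ≤ nbhdDiff W μ y z := (hW.nbhdDiff_mem_Icc y z).1
  rw [← hW.nbhdDiff_sub_nbhdDiff]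
  rcases hp with hp | hp
  · rw [hp, zero_sub, abs_neg, abs_of_nonneg (hnonneg _ _), zero_add]
  · rw [hp, sub_zero, abs_of_nonneg (hnonneg _ _), add_zero]

lemma integral_abs_degree_sub_degree (h : HasNestedNbhds W μ) :
    ∫ p, |degree W μ p.1 - degree W μ p.2| ∂(μ.prod μ) =
      2 * ((∫ x, degree W μ x ∂μ) - ∫ x, degree W μ x ^ 2 ∂μ) := by
  have hswap : ∫ p, nbhdDiff W μ p.2 p.1 ∂(μ.prod μ) = ∫ p, nbhdDiff W μ p.1 p.2 ∂(μ.prod μ) :=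
    integral_prod_swap fun p : Ω × Ω => nbhdDiff W μ p.1 p.2
  rw [integral_congr_ae (hW.abs_degree_sub_degree h),
    integral_add hW.integrable_nbhdDiff (by exact hW.integrable_nbhdDiff.swap), hswap,
    hW.integral_nbhdDiff]
  ring

lemma ae_map_degree_mem_I01 : ∀ᵐ t ∂(μ.map (degree W μ)), t ∈ I01 :=
  (ae_map_iff hW.measurable_degree.aemeasurable measurableSet_Icc).2 (.of_forall hW.degree_mem_Icc)

theorem integral_sq_cdf_degree_sub_cdf (h : HasNestedNbhds W μ) :
    ∫ t, (cdf (μ.map (degree W μ)) t - cdf uniformI01 t) ^ 2 =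
      2 * ((∫ x, degree W μ x ^ 2 ∂μ) - ∫ x, degree W μ x ∂μ) + 1 / 3 := by
  have hd := hW.measurable_degree (μ := μ)
  have := Measure.isProbabilityMeasure_map hd.aemeasurable (μ := μ)
  rw [integral_sq_cdf_sub_cdf_uniformI01 hW.ae_map_degree_mem_I01,
    Measure.map_prod_map _ _ hd hd, integral_map (by fun_prop) (by fun_prop),
    integral_map (by fun_prop) (by fun_prop), integral_map (by fun_prop) (by fun_prop)]
  simp only [Prod.map_fst, Prod.map_snd, hW.integral_abs_degree_sub_degree h]
  ring

theorem neg_one_sixth_le_integral_sq_degree_sub (h : HasNestedNbhds W μ) :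
    -(1 / 6 : ℝ) ≤ (∫ x, degree W μ x ^ 2 ∂μ) - ∫ x, degree W μ x ∂μ := by
  have hnonneg : 0 ≤ ∫ t, (cdf (μ.map (degree W μ)) t - cdf uniformI01 t) ^ 2 :=
    integral_nonneg fun t => sq_nonneg _
  rw [hW.integral_sq_cdf_degree_sub_cdf h] at hnonneg
  linarith

theorem measurePreserving_degree (h : HasNestedNbhds W μ)
    (heq : (∫ x, degree W μ x ^ 2 ∂μ) - ∫ x, degree W μ x ∂μ = -(1 / 6)) :
    MeasurePreserving (degree W μ) μ uniformI01 := by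
  have hd := hW.measurable_degree (μ := μ)
  have := Measure.isProbabilityMeasure_map hd.aemeasurable (μ := μ)
  refine ⟨hd, eq_of_integral_sq_cdf_sub_cdf_eq_zero
    (integrable_id_of_ae_mem_I01 hW.ae_map_degree_mem_I01)
    (integrable_id_of_ae_mem_I01 ae_mem_I01) ?_⟩
  rw [hW.integral_sq_cdf_degree_sub_cdf h, heq]
  norm_num

end IsGraphon

end Graphon

section Rigidity

open Set

/-- The half-graphon, the indicator of `x + y ≤ 1`, as a kernel on `ℝ`. -/
def halfGraphon (x y : ℝ) : ℝ := if x + y ≤ 1 then 1 else 0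

lemma isGraphon_halfGraphon : IsGraphon halfGraphon where
  measurable := .ite (measurableSet_le (by fun_prop) measurable_const) measurable_const
    measurable_const
  symm x y := by rw [halfGraphon, halfGraphon, add_comm]
  mem_Icc x y := by
    unfold halfGraphon
    split_ifs <;> norm_num

lemma degree_halfGraphon {x : ℝ} (hx : x ∈ I01) : degree halfGraphon uniformI01 x = 1 - x := by
  have hset : {y | x + y ≤ 1} = (fun y => 1 - y) ⁻¹' Ici x := by
    ext y
    simp only [mem_ofPred_eq, mem_preimage, mem_Ici, le_sub_iff_add_le]
  have hmeas : MeasurableSet {y | x + y ≤ 1} := measurableSet_le (by fun_prop) measurable_const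
  calc degree halfGraphon uniformI01 x = uniformI01.real {y | x + y ≤ 1} :=
        integral_indicator_one hmeas
    _ = 1 - x := by
        rw [hset, measurePreserving_one_sub_uniformI01.measureReal_preimage
          measurableSet_Ici.nullMeasurableSet, measureReal_uniformI01_Ici hx]

variable {Ω : Type*} [MeasurableSpace Ω] {μ : Measure Ω} [IsProbabilityMeasure μ]
  {W : Ω → Ω → ℝ}

namespace IsGraphon

variable (hW : IsGraphon W)
include hW

lemma ae_eq_one_of_degree_le (h : HasNestedNbhds W μ) :
    ∀ᵐ y ∂μ, ∀ᵐ z ∂μ, ∀ᵐ x ∂μ, degree W μ y ≤ degree W μ z → W y x ≠ 0 → W z x = 1 := by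
  filter_upwards [Measure.ae_ae_of_ae_prod h] with y hy
  filter_upwards [hy] with z hyz
  refine Filter.eventually_imp_distrib_left.2 fun hle => ?_
  have hdiff : nbhdDiff W μ y z = 0 := by
    have := hW.nbhdDiff_sub_nbhdDiff (μ := μ) y z
    have := (hW.nbhdDiff_mem_Icc (μ := μ) y z).1
    rcases hyz with hyz | hzy
    · exact hyz
    · linarith
  rw [nbhdDiff, integral_eq_zero_iff_of_nonneg (fun x => (hW.mul_one_sub_mem_Icc y x z x).1)
    (hW.integrable_mul_one_sub y z)] at hdiff
  filter_upwards [hdiff] with x hx hne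
  exact (sub_eq_zero.1 ((mul_eq_zero.1 hx).resolve_left hne)).symm

-- A neighbour `x` of `y` is a neighbour of almost every `z` of degree at least that of `y`.
lemma measureReal_degree_ge_le_degree (h : HasNestedNbhds W μ) :
    ∀ᵐ y ∂μ, ∀ᵐ x ∂μ, W y x ≠ 0 → μ.real {z | degree W μ y ≤ degree W μ z} ≤ degree W μ x := by
  filter_upwards [hW.ae_eq_one_of_degree_le h] with y hy
  have hmeas : MeasurableSet {p : Ω × Ω |
      degree W μ y ≤ degree W μ p.1 → W y p.2 ≠ 0 → W p.1 p.2 = 1} := by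
    have hWm := hW.measurable
    exact .imp (measurableSet_le measurable_const (hW.measurable_degree.comp measurable_fst))
      (.imp (measurableSet_eq_fun (by fun_prop) measurable_const).compl
        (measurableSet_eq_fun hWm measurable_const))
  filter_upwards [(Measure.ae_ae_comm hmeas).1 hy] with x hx hne
  have hset : MeasurableSet {z | degree W μ y ≤ degree W μ z} :=
    measurableSet_le measurable_const hW.measurable_degree
  rw [← integral_indicator_one hset, ← hW.integral_left x]
  refine integral_mono_ae ((integrable_const 1).indicator hset) (hW.integrable_left x) ?_
  filter_upwards [hx] with z hz
  exact indicator_apply_le' (fun hle => (hz hle hne).ge) fun _ => (hW.mem_Icc z x).1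

lemma one_le_degree_add_degree (h : HasNestedNbhds W μ)
    (hd : MeasurePreserving (degree W μ) μ uniformI01) :
    ∀ᵐ y ∂μ, ∀ᵐ x ∂μ, W y x ≠ 0 → 1 ≤ degree W μ y + degree W μ x := by
  filter_upwards [hW.measureReal_degree_ge_le_degree h] with y hy
  filter_upwards [hy] with x hx hne
  have htail : μ.real {z | degree W μ y ≤ degree W μ z} = 1 - degree W μ y := by
    rw [← measureReal_uniformI01_Ici (hW.degree_mem_Icc y)]
    exact hd.measureReal_preimage measurableSet_Ici.nullMeasurableSet
  linarith [hx hne]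

lemma degree_add_degree_le_one (h : HasNestedNbhds W μ)
    (hd : MeasurePreserving (degree W μ) μ uniformI01) :
    ∀ᵐ y ∂μ, ∀ᵐ x ∂μ, W y x ≠ 1 → degree W μ y + degree W μ x ≤ 1 := by
  have hd' : MeasurePreserving (degree (fun x y => 1 - W x y) μ) μ uniformI01 := by
    rw [funext (hW.degree_one_sub (μ := μ))]
    exact measurePreserving_one_sub_uniformI01.comp hd
  filter_upwards [hW.one_sub.one_le_degree_add_degree h.one_sub hd'] with y hy
  filter_upwards [hy] with x hx hne
  simp only [hW.degree_one_sub] at hx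
  linarith [hx (sub_ne_zero.2 hne.symm)]

theorem ae_eq_halfGraphon_degree (h : HasNestedNbhds W μ)
    (hd : MeasurePreserving (degree W μ) μ uniformI01) :
    ∀ᵐ p ∂(μ.prod μ), W p.1 p.2 = halfGraphon (1 - degree W μ p.1) (1 - degree W μ p.2) := by
  have hmeas := hW.measurable_degree (μ := μ)
  have hhalf := isGraphon_halfGraphon.measurable_comp
    (by fun_prop : Measurable fun p : Ω × Ω => 1 - degree W μ p.1)
    (by fun_prop : Measurable fun p : Ω × Ω => 1 - degree W μ p.2)
  refine (Measure.ae_prod_iff_ae_ae (measurableSet_eq_fun hW.measurable hhalf)).2 ?_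
  filter_upwards [hW.one_le_degree_add_degree h hd, hW.degree_add_degree_le_one h hd]
    with y hpos hlt
  have hne : ∀ᵐ x ∂μ, degree W μ x ≠ 1 - degree W μ y :=
    hd.quasiMeasurePreserving.ae (Measure.ae_ne _ _)
  filter_upwards [hpos, hlt, hne] with x hpos hlt hne
  simp only [halfGraphon, Function.uncurry_apply_pair]
  split_ifs with hle
  · by_contra h1
    exact hne (by linarith [hlt h1])
  · by_contra h0
    exact hle (by linarith [hpos h0])

end IsGraphon

end Rigidity

section HomDensity

open Finset ProbabilityTheory

variable {Ω Ω' : Type*} [MeasurableSpace Ω] [MeasurableSpace Ω'] {n : ℕ}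

section Coordinates

variable {ι : Type*} [Fintype ι] (μ : Measure Ω) [IsProbabilityMeasure μ]

lemma iIndepFun_coord : iIndepFun (fun (i : ι) (x : ι → Ω) => x i) (Measure.pi fun _ => μ) :=
  iIndepFun_pi (X := fun _ => id) fun _ => aemeasurable_id

lemma hasLaw_coord (i : ι) : HasLaw (fun x : ι → Ω => x i) μ (Measure.pi fun _ => μ) :=
  (measurePreserving_eval (fun _ => μ) i).hasLaw

lemma hasLaw_coord_pair {i j : ι} (hij : i ≠ j) :
    HasLaw (fun x : ι → Ω => (x i, x j)) (μ.prod μ) (Measure.pi fun _ => μ) :=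
  ((iIndepFun_coord μ).indepFun hij).hasLaw_prod (hasLaw_coord μ i) (hasLaw_coord μ j)

lemma hasLaw_coord_triple {i j k : ι} (hij : i ≠ j) (hik : i ≠ k) (hjk : j ≠ k) :
    HasLaw (fun x : ι → Ω => ((x i, x j), x k)) ((μ.prod μ).prod μ) (Measure.pi fun _ => μ) :=
  ((iIndepFun_coord μ).indepFun_prodMk (fun _ => by fun_prop) i j k hik hjk).hasLaw_prod
    (hasLaw_coord_pair μ hij) (hasLaw_coord μ k)

lemma hasLaw_coord_pair_pair {i j k l : ι} (hij : i ≠ j) (hkl : k ≠ l) (hik : i ≠ k) (hil : i ≠ l)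
    (hjk : j ≠ k) (hjl : j ≠ l) :
    HasLaw (fun x : ι → Ω => ((x i, x j), (x k, x l))) ((μ.prod μ).prod (μ.prod μ))
      (Measure.pi fun _ => μ) :=
  ((iIndepFun_coord μ).indepFun_prodMk_prodMk (fun _ => by fun_prop) i j k l hik hil hjk
    hjl).hasLaw_prod (hasLaw_coord_pair μ hij) (hasLaw_coord_pair μ hkl)

end Coordinates

/-- The homomorphism density `t(F,W)` of a graph `F` in a kernel `W` on the measure space
`(Ω, μ)`. The condition `p.1 < p.2` makes every edge of `F` contribute one factor. -/
def homDensityOn (μ : Measure Ω) (F : SimpleGraph (Fin n)) (W : Ω → Ω → ℝ) : ℝ :=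
  ∫ x : Fin n → Ω, ∏ p ∈ univ.filter (fun p : Fin n × Fin n => p.1 < p.2 ∧ F.Adj p.1 p.2),
    W (x p.1) (x p.2) ∂(Measure.pi fun _ => μ)

lemma volume_restrict_cube : (volume : Measure (Fin n → ℝ)).restrict (cube n) =
    Measure.pi fun _ => uniformI01 := by
  rw [volume_pi, cube, Measure.restrict_pi_pi]

lemma homDensity_eq_homDensityOn (F : SimpleGraph (Fin n)) (W : ℝ → ℝ → ℝ) :
    homDensity F W = homDensityOn uniformI01 F W := by
  rw [homDensity, homDensityOn, volume_restrict_cube]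

lemma homDensityOn_comp {μ : Measure Ω} {ν : Measure Ω'} [SigmaFinite ν] {e : Ω → Ω'}
    (he : MeasurePreserving e μ ν) (F : SimpleGraph (Fin n)) {W : Ω' → Ω' → ℝ}
    (hW : Measurable (Function.uncurry W)) :
    homDensityOn μ F (fun x y => W (e x) (e y)) = homDensityOn ν F W := by
  have hmeas : Measurable fun x : Fin n → Ω' =>
      ∏ p ∈ univ.filter (fun p : Fin n × Fin n => p.1 < p.2 ∧ F.Adj p.1 p.2),
        W (x p.1) (x p.2) := by
    fun_prop
  exact (measurePreserving_pi (fun _ : Fin n => μ) (fun _ => ν) fun _ =>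
    he).hasLaw.integral_comp hmeas.aestronglyMeasurable

variable {μ : Measure Ω} [IsProbabilityMeasure μ]

lemma homDensityOn_congr_ae {U W : Ω → Ω → ℝ} (h : ∀ᵐ p ∂(μ.prod μ), U p.1 p.2 = W p.1 p.2)
    (F : SimpleGraph (Fin n)) : homDensityOn μ F U = homDensityOn μ F W := by
  have hedge : ∀ p : Fin n × Fin n, ∀ᵐ x ∂(Measure.pi fun _ => μ), p.1 < p.2 →
      U (x p.1) (x p.2) = W (x p.1) (x p.2) := fun p =>
    Filter.eventually_imp_distrib_left.2 fun hp =>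
      ((hasLaw_coord_pair μ hp.ne).measurePreserving (by fun_prop)).quasiMeasurePreserving.ae h
  refine integral_congr_ae ?_
  filter_upwards [ae_all_iff.2 hedge] with x hx
  exact prod_congr rfl fun p hp => hx p (mem_filter.1 hp).2.1

namespace IsGraphon

variable {W : Ω → Ω → ℝ} (hW : IsGraphon W)
include hW

lemma integral_prod_eq_integral_degree :
    ∫ p, W p.1 p.2 ∂(μ.prod μ) = ∫ x, degree W μ x ∂μ :=
  integral_prod _ (.of_mem_Icc 0 1 hW.measurable.aemeasurable (.of_forall fun _ => hW.mem_Icc _ _))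

lemma homDensityOn_pathGraph_two :
    homDensityOn μ (SimpleGraph.pathGraph 2) W = ∫ x, degree W μ x ∂μ := by
  have hedges : univ.filter (fun p : Fin 2 × Fin 2 =>
      p.1 < p.2 ∧ (SimpleGraph.pathGraph 2).Adj p.1 p.2) = {(0, 1)} := by
    ext ⟨i, j⟩
    fin_cases i <;> fin_cases j <;> simp [SimpleGraph.pathGraph_adj]
  simp only [homDensityOn, hedges, prod_singleton]
  rw [← hW.integral_prod_eq_integral_degree]
  exact (hasLaw_coord_pair μ Fin.zero_ne_one).integral_comp hW.measurable.aestronglyMeasurable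

lemma homDensityOn_pathGraph_three :
    homDensityOn μ (SimpleGraph.pathGraph 3) W = ∫ x, degree W μ x ^ 2 ∂μ := by
  have hedges : univ.filter (fun p : Fin 3 × Fin 3 =>
      p.1 < p.2 ∧ (SimpleGraph.pathGraph 3).Adj p.1 p.2) = {(0, 1), (1, 2)} := by
    ext ⟨i, j⟩
    fin_cases i <;> fin_cases j <;> simp [SimpleGraph.pathGraph_adj]
  have hmeas : Measurable fun p : (Ω × Ω) × Ω => W p.1.1 p.2 * W p.2 p.1.2 := by
    have := hW.measurable
    fun_prop
  have hint : Integrable (fun p : (Ω × Ω) × Ω => W p.1.1 p.2 * W p.2 p.1.2) ((μ.prod μ).prod μ) :=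
    .of_mem_Icc 0 1 hmeas.aemeasurable
      (.of_forall fun p => unitInterval.mul_mem (hW.mem_Icc _ _) (hW.mem_Icc _ _))
  calc homDensityOn μ (SimpleGraph.pathGraph 3) W
      = ∫ x : Fin 3 → Ω, W (x 0) (x 1) * W (x 1) (x 2) ∂(Measure.pi fun _ => μ) := by
        simp only [homDensityOn, hedges]
        congr with x
        exact prod_pair (by decide)
    _ = ∫ p, W p.1.1 p.2 * W p.2 p.1.2 ∂((μ.prod μ).prod μ) :=
        (hasLaw_coord_triple μ (i := (0 : Fin 3)) (j := 2) (k := 1) (by decide) (by decide)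
          (by decide)).integral_comp hmeas.aestronglyMeasurable
    _ = ∫ y, ∫ p : Ω × Ω, W p.1 y * W y p.2 ∂(μ.prod μ) ∂μ := integral_prod_symm _ hint
    _ = ∫ y, degree W μ y ^ 2 ∂μ := by
        congr with y
        rw [integral_prod_mul (fun x => W x y) (W y), hW.integral_left, degree, sq]

lemma integral_fourCycle :
    ∫ x : Fin 4 → Ω, W (x 0) (x 1) * (1 - W (x 1) (x 2)) * W (x 2) (x 3) * (1 - W (x 3) (x 0))
        ∂(Measure.pi fun _ => μ) =
      ∫ p, nbhdDiff W μ p.1 p.2 * nbhdDiff W μ p.2 p.1 ∂(μ.prod μ) := by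
  have hmeas : Measurable fun q : (Ω × Ω) × Ω × Ω =>
      W q.1.1 q.2.1 * (1 - W q.1.2 q.2.1) * (W q.1.2 q.2.2 * (1 - W q.1.1 q.2.2)) := by
    have := hW.measurable
    fun_prop
  have hint : Integrable (fun q : (Ω × Ω) × Ω × Ω =>
      W q.1.1 q.2.1 * (1 - W q.1.2 q.2.1) * (W q.1.2 q.2.2 * (1 - W q.1.1 q.2.2)))
      ((μ.prod μ).prod (μ.prod μ)) :=
    .of_mem_Icc 0 1 hmeas.aemeasurable (.of_forall fun q =>
      unitInterval.mul_mem (hW.mul_one_sub_mem_Icc _ _ _ _) (hW.mul_one_sub_mem_Icc _ _ _ _))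
  calc ∫ x : Fin 4 → Ω, W (x 0) (x 1) * (1 - W (x 1) (x 2)) * W (x 2) (x 3) * (1 - W (x 3) (x 0))
        ∂(Measure.pi fun _ => μ)
      = ∫ x : Fin 4 → Ω, W (x 0) (x 1) * (1 - W (x 2) (x 1)) *
          (W (x 2) (x 3) * (1 - W (x 0) (x 3))) ∂(Measure.pi fun _ => μ) := by
        congr with x
        rw [hW.symm (x 1), hW.symm (x 3), mul_assoc]
    _ = ∫ q, W q.1.1 q.2.1 * (1 - W q.1.2 q.2.1) * (W q.1.2 q.2.2 * (1 - W q.1.1 q.2.2))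
          ∂((μ.prod μ).prod (μ.prod μ)) :=
        (hasLaw_coord_pair_pair μ (i := (0 : Fin 4)) (j := 2) (k := 1) (l := 3) (by decide)
          (by decide) (by decide) (by decide) (by decide) (by decide)).integral_comp
            hmeas.aestronglyMeasurable
    _ = ∫ p, nbhdDiff W μ p.1 p.2 * nbhdDiff W μ p.2 p.1 ∂(μ.prod μ) := by
        rw [integral_prod _ hint]
        congr with p
        exact integral_prod_mul (fun x => W p.1 x * (1 - W p.2 x))
          fun x => W p.2 x * (1 - W p.1 x)

theorem hasNestedNbhds_of_integral_fourCycle_eq_zero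
    (h : ∫ x : Fin 4 → Ω, W (x 0) (x 1) * (1 - W (x 1) (x 2)) * W (x 2) (x 3) *
      (1 - W (x 3) (x 0)) ∂(Measure.pi fun _ => μ) = 0) : HasNestedNbhds W μ := by
  have hmem (p : Ω × Ω) : nbhdDiff W μ p.1 p.2 * nbhdDiff W μ p.2 p.1 ∈ Set.Icc (0 : ℝ) 1 :=
    unitInterval.mul_mem (hW.nbhdDiff_mem_Icc _ _) (hW.nbhdDiff_mem_Icc _ _)
  have hmeas : Measurable fun p : Ω × Ω => nbhdDiff W μ p.1 p.2 * nbhdDiff W μ p.2 p.1 :=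
    hW.measurable_nbhdDiff.mul (hW.measurable_nbhdDiff.comp measurable_swap)
  rw [hW.integral_fourCycle, integral_eq_zero_iff_of_nonneg (fun p => (hmem p).1)
    (.of_mem_Icc 0 1 hmeas.aemeasurable (.of_forall hmem))] at h
  filter_upwards [h] with p hp using mul_eq_zero.1 hp

end IsGraphon

end HomDensity

section Extremal

lemma integral_sq_degree_sub_halfGraphon :
    (∫ x, degree halfGraphon uniformI01 x ^ 2 ∂uniformI01) -
      ∫ x, degree halfGraphon uniformI01 x ∂uniformI01 = -(1 / 6) := by
  have hdegree : ∀ᵐ x ∂uniformI01, degree halfGraphon uniformI01 x = 1 - x := by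
    filter_upwards [ae_mem_I01] with x hx using degree_halfGraphon hx
  have hsq : ∀ᵐ x ∂uniformI01, degree halfGraphon uniformI01 x ^ 2 = (1 - x) ^ 2 := by
    filter_upwards [hdegree] with x hx
    rw [hx]
  have hlaw := measurePreserving_one_sub_uniformI01.hasLaw
  have hmean : ∫ x, (1 - x) ∂uniformI01 = ∫ x, x ∂uniformI01 :=
    hlaw.integral_comp (f := fun x => x) (by fun_prop)
  have hsqmean : ∫ x, (1 - x) ^ 2 ∂uniformI01 = ∫ x, x ^ 2 ∂uniformI01 :=
    hlaw.integral_comp (f := fun x => x ^ 2) (by fun_prop)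
  rw [integral_congr_ae hsq, integral_congr_ae hdegree, hsqmean, hmean, integral_sq_uniformI01,
    integral_id_uniformI01]
  norm_num

theorem statement9_general {Ω : Type*} [MeasurableSpace Ω] {μ : Measure Ω}
    [IsProbabilityMeasure μ] {W : Ω → Ω → ℝ} (hW : IsGraphon W)
    (h : ∫ x : Fin 4 → Ω, W (x 0) (x 1) * (1 - W (x 1) (x 2)) * W (x 2) (x 3) *
      (1 - W (x 3) (x 0)) ∂(Measure.pi fun _ => μ) = 0) :
    -(1 / 6 : ℝ) ≤ (∫ x, (∫ y, W x y ∂μ) ^ 2 ∂μ) - ∫ p, W p.1 p.2 ∂(μ.prod μ) ∧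
    ((∫ x, (∫ y, W x y ∂μ) ^ 2 ∂μ) - (∫ p, W p.1 p.2 ∂(μ.prod μ)) = -(1 / 6 : ℝ) ↔
      ∀ (n : ℕ) (F : SimpleGraph (Fin n)), homDensityOn μ F W = homDensity F halfGraphon) := by
  have hnested := hW.hasNestedNbhds_of_integral_fourCycle_eq_zero h
  rw [hW.integral_prod_eq_integral_degree]
  refine ⟨hW.neg_one_sixth_le_integral_sq_degree_sub hnested, fun heq n F => ?_, fun hiso => ?_⟩
  · have hdegree := hW.measurePreserving_degree hnested heq
    rw [homDensityOn_congr_ae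
        (W := fun x y => halfGraphon (1 - degree W μ x) (1 - degree W μ y))
        (hW.ae_eq_halfGraphon_degree hnested hdegree) F,
      homDensity_eq_homDensityOn]
    exact homDensityOn_comp (measurePreserving_one_sub_uniformI01.comp hdegree) F
      isGraphon_halfGraphon.measurable
  · have hpath := hiso 3 (SimpleGraph.pathGraph 3)
    have hedge := hiso 2 (SimpleGraph.pathGraph 2)
    rw [homDensity_eq_homDensityOn, hW.homDensityOn_pathGraph_three,
      isGraphon_halfGraphon.homDensityOn_pathGraph_three] at hpath
    rw [homDensity_eq_homDensityOn, hW.homDensityOn_pathGraph_two,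
      isGraphon_halfGraphon.homDensityOn_pathGraph_two] at hedge
    exact (congrArg₂ (· - ·) hpath hedge).trans integral_sq_degree_sub_halfGraphon

end Extremal

section UnitInterval

/-- Lebesgue measure on the subtype `[0,1]`, where a graphon in `𝒲₀` is an `IsGraphon`. -/
def volumeI01 : Measure I01 := Measure.comap Subtype.val volume

lemma measurePreserving_coe_I01 : MeasurePreserving (Subtype.val : I01 → ℝ) volumeI01 uniformI01 :=
  measurePreserving_subtype_coe measurableSet_Icc

instance : IsProbabilityMeasure volumeI01 :=
  measurePreserving_coe_I01.hasLaw.isProbabilityMeasure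

lemma integral_cube {n : ℕ} {f : (Fin n → ℝ) → ℝ} (hf : Measurable f) :
    ∫ x in cube n, f x = ∫ x : Fin n → I01, f (fun i => x i) ∂(Measure.pi fun _ => volumeI01) := by
  rw [volume_restrict_cube]
  exact ((measurePreserving_pi _ _ fun _ => measurePreserving_coe_I01).hasLaw.integral_comp
    hf.aestronglyMeasurable).symm

lemma integral_I01 (f : ℝ → ℝ) : ∫ x in I01, f x = ∫ x : I01, f x ∂volumeI01 :=
  (integral_subtype_comap measurableSet_Icc f).symm

lemma integral_I01_prod {f : ℝ × ℝ → ℝ} (hf : Measurable f) :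
    ∫ q in I01 ×ˢ I01, f q = ∫ p : I01 × I01, f (p.1, p.2) ∂(volumeI01.prod volumeI01) := by
  rw [Measure.volume_eq_prod, ← Measure.prod_restrict]
  exact ((measurePreserving_coe_I01.prod measurePreserving_coe_I01).hasLaw.integral_comp
    hf.aestronglyMeasurable).symm

lemma memW0.isGraphon {W : ℝ → ℝ → ℝ} (hW : memW0 W) : IsGraphon fun x y : I01 => W x y where
  measurable := hW.1.comp (by fun_prop : Measurable fun p : I01 × I01 => ((p.1 : ℝ), (p.2 : ℝ)))
  symm x y := hW.2.1 x x.2 y y.2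
  mem_Icc x y := hW.2.2 x x.2 y y.2

lemma homDensity_eq_homDensityOn_I01 {n : ℕ} (F : SimpleGraph (Fin n)) {W : ℝ → ℝ → ℝ}
    (hW : Measurable (Function.uncurry W)) :
    homDensity F W = homDensityOn volumeI01 F fun x y : I01 => W x y := by
  rw [homDensity_eq_homDensityOn, homDensityOn_comp measurePreserving_coe_I01 F hW]

end UnitInterval

/-- if `W ∈ 𝒲₀` satisfies the displayed 4-cycle-type vanishing condition,
then `t(P₃,W) − t(K₂,W) ≥ −1/6`, with equality iff `W` is weakly isomorphic to the
half-graphon. -/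
theorem statement9 (W : ℝ → ℝ → ℝ) (hW : memW0 W)
    (h : (∫ x in cube 4,
      W (x 0) (x 1) * (1 - W (x 1) (x 2)) * W (x 2) (x 3) * (1 - W (x 3) (x 0))) = 0) :
    -(1/6 : ℝ) ≤ (∫ x in I01, (∫ y in I01, W x y) ^ 2) - ∫ q in I01 ×ˢ I01, W q.1 q.2 ∧
    ((∫ x in I01, (∫ y in I01, W x y) ^ 2) - (∫ q in I01 ×ˢ I01, W q.1 q.2) = -(1/6 : ℝ) ↔
      WeaklyIsomorphic W (fun x y => if x + y ≤ 1 then (1 : ℝ) else 0)) := by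
  have hmeas : Measurable fun x : Fin 4 → ℝ =>
      W (x 0) (x 1) * (1 - W (x 1) (x 2)) * W (x 2) (x 3) * (1 - W (x 3) (x 0)) := by
    have := hW.1
    fun_prop
  rw [integral_cube hmeas] at h
  rw [integral_I01_prod (f := fun q => W q.1 q.2) hW.1]
  simp only [WeaklyIsomorphic, homDensity_eq_homDensityOn_I01 _ hW.1, integral_I01]
  exact statement9_general hW.isGraphon h
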